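/- arXiv:2101.01567 — 2 statements merged into one kernel-verified Lean document; each statement's English description precedes it below -/
import Mathlib

section
/- Let n ∈ ℕ with n ≥ 1, and let γ be the 2-adic valuation of n!. Then n! cannot be written as a sum of three squares of integers (i.e., there are no integers a, b, c with n! = a² + b² + c²) if and only if γ is even, α₃(n) is even, and α₅(n) is odd. -/
/-!
Write `n ! = 2 ^ γ * u` with `u` odd. By Legendre's three-square theorem `n !` fails to be a sum of
three squares exactly when `γ` is even and `u ≡ 7 [MOD 8]` (`not_is3_iff`).

The residue of `u` is read off from the binary digits of `n`. Splitting the factors of `n !` into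
even and odd ones gives `n ! = 2 ^ (n / 2) * (n / 2)! * oddProd n` (`factorial_eq`), so `u` is the
product of `oddProd (n / 2 ^ k)` over all `k`. As `1 * 3 * 5 * 7 ≡ 1 [MOD 8]`, `oddProd m` modulo
`8` depends only on `m % 8`: it is `3` for `m % 8 ∈ {3, 4}`, `7` for `m % 8 ∈ {5, 6}` and `1`
otherwise. Since `n / 2 ^ k % 8` is formed by the digits `k`, `k + 1`, `k + 2` of `n`, this yields
`u ≡ 3 ^ α₃(n) * 7 ^ α₅(n)` (`factorial_decomp`), which is `7` exactly when `α₃(n)` is even and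
`α₅(n)` is odd.

The three-square theorem is proved by Dirichlet's method. Hermite reduction shows that a positive
definite integral ternary form of determinant one takes only sums of three squares as values
(`ternary`). If `-d` is a square modulo `d * n - 1`, such a form with value `n` can be written
down (`is3_of_dvd`). For `n` not divisible by `4` and not `7` modulo `8`, a suitable `d` with
`d * n - 1` equal to `p` or `2 * p`, `p` prime, comes from Dirichlet's theorem on primes in
arithmetic progressions, the residue condition being checked by quadratic reciprocity
(`is3_two_mod_four`, `is3_odd_aux`).
-/

/-- `bit n k` is the k-th binary digit of `n` (so `n = Σ_k bit n k * 2^k`). -/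
def bit (n k : ℕ) : ℕ := n / 2 ^ k % 2

/-- `α₃(n)` = #{k ≥ 0 : a_k + 2a_{k+1} + 4a_{k+2} ∈ {3, 4}}. -/
noncomputable def alpha3 (n : ℕ) : ℕ :=
  Nat.card {k : ℕ | bit n k + 2 * bit n (k + 1) + 4 * bit n (k + 2) ∈ ({3, 4} : Set ℕ)}

/-- `α₅(n)` = #{k ≥ 0 : a_k + 2a_{k+1} + 4a_{k+2} ∈ {5, 6}}. -/
noncomputable def alpha5 (n : ℕ) : ℕ :=
  Nat.card {k : ℕ | bit n k + 2 * bit n (k + 1) + 4 * bit n (k + 2) ∈ ({5, 6} : Set ℕ)}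

/-! ### Reduction of binary and ternary quadratic forms -/

/-- `m` is a sum of three integer squares. -/
def Is3 (m : ℤ) : Prop := ∃ a b c : ℤ, m = a ^ 2 + b ^ 2 + c ^ 2

lemma exists_shift (p q : ℤ) (hp : 0 < p) : ∃ k : ℤ, 4 * (q + k * p) ^ 2 ≤ p ^ 2 := by
  refine ⟨-((2 * q + p) / (2 * p)), ?_⟩
  have h1 := Int.emod_add_mul_ediv (2 * q + p) (2 * p)
  have h2 := Int.emod_nonneg (2 * q + p) (show 2 * p ≠ 0 by omega)
  have h3 := Int.emod_lt_of_pos (2 * q + p) (show 0 < 2 * p by omega)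
  set k := (2 * q + p) / (2 * p)
  have h4 : -p ≤ 2 * (q + -k * p) := by nlinarith
  have h5 : 2 * (q + -k * p) ≤ p := by nlinarith
  nlinarith

/-- Lagrange reduction: a positive definite form `p x² + 2 q x y + r y²` takes, at the first vector
of some basis of `ℤ²`, a positive value at most `√(4 D / 3)` with `D = p r - q²`. The bound `N`
only serves the descent on `p`. -/
lemma binary_reduction (N : ℕ) : ∀ p q r : ℤ, 0 < p → p ≤ N → 0 < p * r - q ^ 2 →
    ∃ α β γ δ : ℤ, α * δ - β * γ = 1 ∧ 0 < p * α ^ 2 + 2 * q * α * γ + r * γ ^ 2 ∧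
      3 * (p * α ^ 2 + 2 * q * α * γ + r * γ ^ 2) ^ 2 ≤ 4 * (p * r - q ^ 2) := by
  induction N with
  | zero => intro p q r h1 h2; simp at h2; omega
  | succ N ih =>
    intro p q r hp hN hD
    obtain ⟨k, hk⟩ := exists_shift p q hp
    -- `(k, 1)` has value `r + 2 k q + k² p`; if this is below `p`, descend with the form in the
    -- basis `(k, 1), (-1, 0)`
    by_cases hr : r + 2 * k * q + k ^ 2 * p < p
    · have hpos : 0 < r + 2 * k * q + k ^ 2 * p := by
        by_contra! h
        nlinarith [sq_nonneg (q + k * p)]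
      obtain ⟨α, β, γ, δ, h1, h2, h3⟩ := ih (r + 2 * k * q + k ^ 2 * p) (-(q + k * p)) p hpos
        (by push_cast at hN; omega) (by nlinarith)
      refine ⟨k * α - γ, k * β - δ, α, β, by linear_combination h1, ?_, ?_⟩
      · convert h2 using 1; ring
      · convert h3 using 1 <;> ring
    · refine ⟨1, 0, 0, 1, by ring, by simpa using hp, ?_⟩
      nlinarith

lemma binary_two_squares (p q r : ℤ) (hp : 0 < p) (hD : p * r - q ^ 2 = 1) (y z : ℤ) :
    ∃ s t : ℤ, p * y ^ 2 + 2 * q * y * z + r * z ^ 2 = s ^ 2 + t ^ 2 := by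
  obtain ⟨α, β, γ, δ, h1, h2, h3⟩ := binary_reduction p.toNat p q r hp (by omega) (by omega)
  have h4 : p * α ^ 2 + 2 * q * α * γ + r * γ ^ 2 = 1 := by nlinarith
  set B := p * α * β + q * (α * δ + β * γ) + r * γ * δ with hB
  have h5 : p * β ^ 2 + 2 * q * β * δ + r * δ ^ 2 = 1 + B ^ 2 := by
    linear_combination (-(p * β ^ 2 + 2 * q * β * δ + r * δ ^ 2)) * h4 +
      (α * δ - β * γ) ^ 2 * hD + (α * δ - β * γ + 1) * h1
  -- coordinates of `(y, z)` in the basis `(α, γ), (β, δ)`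
  obtain ⟨Y, hY⟩ : ∃ Y, Y = δ * y - β * z := ⟨_, rfl⟩
  obtain ⟨Z, hZ⟩ : ∃ Z, Z = α * z - γ * y := ⟨_, rfl⟩
  have hy : y = α * Y + β * Z := by rw [hY, hZ]; linear_combination (-y) * h1
  have hz : z = γ * Y + δ * Z := by rw [hY, hZ]; linear_combination (-z) * h1
  refine ⟨Y + B * Z, Z, ?_⟩
  rw [hy, hz]
  linear_combination Y ^ 2 * h4 + Z ^ 2 * h5

/-- The Hermite bound for a reduced ternary form of determinant one, with `a` the first diagonal
entry and `a * d - b ^ 2` the leading binary minor. -/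
lemma eq_one_of_reduced (a b d : ℤ) (ha : 0 < a) (hd : a ≤ d) (hb : 4 * b ^ 2 ≤ a ^ 2)
    (hg : 3 * (a * d - b ^ 2) ^ 2 ≤ 4 * a) : a = 1 := by
  obtain ⟨g, hgg⟩ : ∃ g, g = a * d - b ^ 2 := ⟨_, rfl⟩
  rw [← hgg] at hg
  have h5 : 3 * a ^ 2 ≤ 4 * g := by nlinarith
  by_contra hne
  have h6 : 2 ≤ a := by omega
  have h7 : (3 * a ^ 2) ^ 2 ≤ (4 * g) ^ 2 := pow_le_pow_left₀ (by positivity) h5 2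
  have h8 : 27 * a ^ 4 ≤ 64 * a := by
    rw [mul_pow, mul_pow, ← pow_mul] at h7
    norm_num at h7
    linarith
  have h9 : 2 ^ 3 * a ≤ a ^ 3 * a :=
    mul_le_mul_of_nonneg_right (pow_le_pow_left₀ (by norm_num) h6 3) ha.le
  rw [← pow_succ] at h9
  norm_num at h9
  omega

/-- Hermite reduction: a positive definite integral ternary form of determinant one only takes
values that are sums of three squares. The bound `N` only serves the descent on the first
coefficient `a`. In each step the basis is changed so that the binary form of determinant `a` left
after completing the square in `x` has a small first coefficient, and so that `|b| ≤ a / 2`; then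
either `d < a` and the first two basis vectors are swapped, or `a = 1`, and `x` splits off. -/
lemma ternary (N : ℕ) : ∀ a b c d e f : ℤ, 0 < a → a ≤ N → 0 < a * d - b ^ 2 →
    a * d * f + 2 * b * c * e - a * e ^ 2 - d * c ^ 2 - f * b ^ 2 = 1 →
    ∀ x y z : ℤ, Is3 (a * x ^ 2 + 2 * b * x * y + 2 * c * x * z + d * y ^ 2 + 2 * e * y * z
      + f * z ^ 2) := by
  induction N with
  | zero => intro a b c d e f h1 h2; simp at h2; omega
  | succ N ih =>
    intro a b c d e f ha hN hg hdet x y z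
    obtain ⟨α, β, γ, δ, h1, h2, h3⟩ := binary_reduction (a * d - b ^ 2).toNat (a * d - b ^ 2)
      (a * e - b * c) (a * f - c ^ 2) hg (by omega) (by
        have : (a * d - b ^ 2) * (a * f - c ^ 2) - (a * e - b * c) ^ 2 = a := by
          linear_combination a * hdet
        omega)
    have hG : (a * d - b ^ 2) * (a * f - c ^ 2) - (a * e - b * c) ^ 2 = a := by
      linear_combination a * hdet
    rw [hG] at h3
    obtain ⟨k, hk⟩ := exists_shift a (b * α + c * γ) ha
    -- the Gram matrix in the basis `e₁, k e₁ + α e₂ + γ e₃, β e₂ + δ e₃`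
    obtain ⟨b', hb'⟩ : ∃ b', b' = b * α + c * γ + k * a := ⟨_, rfl⟩
    obtain ⟨c', hc'⟩ : ∃ c', c' = b * β + c * δ := ⟨_, rfl⟩
    obtain ⟨d', hd'⟩ : ∃ d', d' = a * k ^ 2 + 2 * k * (b * α + c * γ) + d * α ^ 2 +
      2 * e * α * γ + f * γ ^ 2 := ⟨_, rfl⟩
    obtain ⟨e', he'⟩ : ∃ e', e' = k * (b * β + c * δ) + d * α * β + e * (α * δ + β * γ) +
      f * γ * δ := ⟨_, rfl⟩
    obtain ⟨f', hf'⟩ : ∃ f', f' = d * β ^ 2 + 2 * e * β * δ + f * δ ^ 2 := ⟨_, rfl⟩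
    have hg' : (a * d - b ^ 2) * α ^ 2 + 2 * (a * e - b * c) * α * γ + (a * f - c ^ 2) * γ ^ 2
      = a * d' - b' ^ 2 := by rw [hb', hd']; ring
    rw [hg'] at h2 h3
    rw [← hb'] at hk
    have hdet' : a * d' * f' + 2 * b' * c' * e' - a * e' ^ 2 - d' * c' ^ 2 - f' * b' ^ 2 = 1 := by
      rw [hb', hc', hd', he', hf']
      linear_combination (α * δ - β * γ) ^ 2 * hdet + (α * δ - β * γ + 1) * h1
    obtain ⟨Y, hY⟩ : ∃ Y, Y = δ * y - β * z := ⟨_, rfl⟩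
    obtain ⟨Z, hZ⟩ : ∃ Z, Z = α * z - γ * y := ⟨_, rfl⟩
    have hy : y = α * Y + β * Z := by rw [hY, hZ]; linear_combination (-y) * h1
    have hz : z = γ * Y + δ * Z := by rw [hY, hZ]; linear_combination (-z) * h1
    have key : a * x ^ 2 + 2 * b * x * y + 2 * c * x * z + d * y ^ 2 + 2 * e * y * z + f * z ^ 2 =
      a * (x - k * Y) ^ 2 + 2 * b' * (x - k * Y) * Y + 2 * c' * (x - k * Y) * Z + d' * Y ^ 2
        + 2 * e' * Y * Z + f' * Z ^ 2 := by
      rw [hy, hz, hb', hc', hd', he', hf']; ring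
    rw [key]
    generalize x - k * Y = X
    have hd0 : 0 < d' := by
      have : 0 < a * d' := by linarith [sq_nonneg b']
      exact pos_of_mul_pos_right this ha.le
    by_cases hlt : d' < a
    · have := ih d' b' e' a c' f' hd0 (by push_cast at hN; omega) (by linarith)
        (by linear_combination hdet') Y X Z
      convert this using 1; ring
    · have ha1 : a = 1 := eq_one_of_reduced a b' d' ha (by omega) hk h3
      subst ha1
      obtain ⟨s, t, hst⟩ := binary_two_squares (d' - b' ^ 2) (e' - b' * c') (f' - c' ^ 2)
        (by linarith) (by linear_combination hdet') Y Z
      exact ⟨X + b' * Y + c' * Z, s, t, by linear_combination hst⟩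

/-- With `t² + d = a (d n - 1)`, the symmetric matrix with rows `(a, t, 1)`, `(t, d n - 1, 0)`,
`(1, 0, n)` is positive definite of determinant one, and its form takes the value `n` at
`(0, 0, 1)`. -/
lemma is3_of_dvd (n d t : ℤ) (hd : 0 < d) (hw : 0 < d * n - 1) (h : d * n - 1 ∣ t ^ 2 + d) :
    Is3 n := by
  obtain ⟨a, ha⟩ := h
  have ha0 : 0 < a := by
    by_contra! h
    nlinarith [sq_nonneg t]
  simpa using ternary a.toNat a t 1 (d * n - 1) 0 n ha0 (by omega) (by nlinarith)
    (by linear_combination (-n) * ha) 0 0 1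

/-! ### Legendre's three-square theorem -/

lemma exists_dvd (d p : ℕ) (hp : p.Prime) (hJ : jacobiSym (-d) p = 1) :
    ∃ t : ℤ, (p : ℤ) ∣ t ^ 2 + d := by
  have := Fact.mk hp
  obtain ⟨s, hs⟩ := ZMod.isSquare_of_jacobiSym_eq_one hJ
  obtain ⟨t, rfl⟩ := ZMod.intCast_surjective s
  refine ⟨t, ?_⟩
  rw [← ZMod.intCast_zmod_eq_zero_iff_dvd]
  push_cast at hs ⊢
  linear_combination -hs

/-- Here `p = d * n - 1` is prime with `p ≡ d ≡ 1 [MOD 4]`, so that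
`(-d / p) = (d / p) = (p / d) = (-1 / d) = 1`. -/
lemma is3_two_mod_four (n : ℕ) (hn : n % 4 = 2) : Is3 n := by
  have hcop : (n - 1).Coprime (4 * n) := by
    refine Nat.Coprime.mul_right ?_ ?_
    · exact Nat.Coprime.pow_right 2 (Nat.coprime_two_right.2 (Nat.odd_iff.2 (by omega)))
    · exact (Nat.coprime_self_sub_left (by omega : 1 ≤ n)).2 (by simp)
  obtain ⟨p, hlt, hp, hmod⟩ := Nat.forall_exists_prime_gt_and_modEq (n - 1)
    (show 4 * n ≠ 0 by omega) hcop
  obtain ⟨j, hj⟩ := (Nat.modEq_iff_dvd' hlt.le).1 hmod.symm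
  have hpj : p = (4 * n) * j + (n - 1) := by omega
  have hpd : (p : ℤ) = ((4 * j + 1 : ℕ) : ℤ) * n - 1 := by
    rw [hpj]; push_cast [show 1 ≤ n by omega]; ring
  have hp4 : p % 4 = 1 := by
    rw [hpj, mul_assoc]; omega
  have hpodd : Odd p := Nat.odd_iff.2 (by omega)
  have hd4 : (4 * j + 1) % 4 = 1 := by omega
  obtain ⟨d, hd⟩ : ∃ d, d = 4 * j + 1 := ⟨_, rfl⟩
  rw [← hd] at hpd hd4
  have hJ : jacobiSym (-d) p = 1 := by
    rw [neg_eq_neg_one_mul, jacobiSym.mul_left, jacobiSym.at_neg_one hpodd,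
      ZMod.χ₄_nat_one_mod_four hp4, one_mul, jacobiSym.quadratic_reciprocity_one_mod_four hd4 hpodd,
      jacobiSym.mod_left' (a₂ := -1), jacobiSym.at_neg_one (Nat.odd_iff.2 (by omega)),
      ZMod.χ₄_nat_one_mod_four hd4]
    rw [hpd, sub_eq_neg_add, Int.add_mul_emod_self_left]
  obtain ⟨t, ht⟩ := exists_dvd d p hp hJ
  have := hp.pos
  exact is3_of_dvd n d t (by omega) (by omega) (by rwa [← hpd])

/-- Since `-2 p ≡ 1` modulo `d` and `(-2 / d) = 1`, also `(p / d) = 1`, and reciprocity turns this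
into `(-d / p) = 1`. -/
lemma is3_odd_aux (n p d : ℕ) (hp : p.Prime) (h2p : 2 * p + 1 = d * n)
    (hd : d % 8 = 1 ∨ d % 8 = 3) (hp4 : p % 4 = 1 ∨ p % 4 = 3 ∧ d % 4 = 3) : Is3 n := by
  have hpodd : Odd p := Nat.odd_iff.2 (by omega)
  have hdodd : Odd d := Nat.odd_iff.2 (by omega)
  have h2p' : (d : ℤ) * n - 1 = 2 * p := by
    have : (2 * p + 1 : ℤ) = d * n := by exact_mod_cast h2p
    omega
  have hpd : jacobiSym p d = 1 := by
    have h1 : jacobiSym (-2) d = 1 := by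
      rw [jacobiSym.at_neg_two hdodd, ZMod.χ₈'_nat_eq_if_mod_eight, if_neg (by omega), if_pos hd]
    have h2 : jacobiSym (-2 * p) d = 1 := by
      rw [jacobiSym.mod_left' (a₂ := 1), jacobiSym.one_left]
      rw [show (-2 * p : ℤ) = 1 + d * (-n) by linarith, Int.add_mul_emod_self_left]
    rwa [jacobiSym.mul_left, h1, one_mul] at h2
  have hJ : jacobiSym (-d) p = 1 := by
    rw [neg_eq_neg_one_mul, jacobiSym.mul_left, jacobiSym.at_neg_one hpodd]
    rcases hp4 with h | ⟨h, h'⟩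
    · rw [ZMod.χ₄_nat_one_mod_four h, jacobiSym.quadratic_reciprocity_one_mod_four' hdodd h, hpd]
      rfl
    · rw [ZMod.χ₄_nat_three_mod_four h, jacobiSym.quadratic_reciprocity_three_mod_four h' h, hpd]
      rfl
  -- an odd square root of `-d` modulo `p` is one modulo `2 * p`
  obtain ⟨t, ht, hto⟩ : ∃ t : ℤ, (p : ℤ) ∣ t ^ 2 + d ∧ Odd t := by
    obtain ⟨t, ht⟩ := exists_dvd d p hp hJ
    rcases Int.even_or_odd t with h | h
    · refine ⟨t + p, ?_, h.add_odd (by exact_mod_cast hpodd)⟩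
      have : (t + p) ^ 2 + d = (t ^ 2 + d) + p * (2 * t + p) := by ring
      rw [this]
      exact dvd_add ht (dvd_mul_right _ _)
    · exact ⟨t, ht, h⟩
  have := hp.pos
  refine is3_of_dvd n d t (by omega) (by omega) ?_
  rw [h2p']
  refine IsCoprime.mul_dvd ?_ ?_ ht
  · exact Nat.isCoprime_iff_coprime.2 (Nat.coprime_two_left.2 hpodd)
  · exact even_iff_two_dvd.1 ((hto.pow).add_odd (by exact_mod_cast hdodd))

/-- A prime `p ≡ (c n - 1) / 2` modulo `4 n` satisfies `2 p + 1 = (8 j + c) n` for some `j`. -/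
lemma is3_odd_of_coeff (n c m : ℕ) (hc : c = 1 ∨ c = 3) (hm : 2 * m + 1 = c * n)
    (hm4 : m % 4 = 1 ∨ m % 4 = 3 ∧ c = 3) : Is3 n := by
  have hn : n ≠ 0 := by rintro rfl; omega
  have hcop : m.Coprime (4 * n) := by
    refine Nat.Coprime.mul_right ?_ ?_
    · exact Nat.Coprime.pow_right 2 (Nat.coprime_two_right.2 (Nat.odd_iff.2 (by omega)))
    · have : (2 * m + 1 : ℤ) = c * n := by exact_mod_cast hm
      exact Nat.isCoprime_iff_coprime.1 ⟨-2, c, by linarith⟩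
  obtain ⟨p, hlt, hp, hmod⟩ := Nat.forall_exists_prime_gt_and_modEq m
    (show 4 * n ≠ 0 by omega) hcop
  obtain ⟨j, hj⟩ := (Nat.modEq_iff_dvd' hlt.le).1 hmod.symm
  have hpj : p = 4 * (n * j) + m := by rw [← mul_assoc]; omega
  exact is3_odd_aux n p (8 * j + c) hp (by rw [add_mul, ← hm, hpj]; ring) (by omega) (by omega)

lemma is3_of_mod (n : ℕ) (h4 : n % 4 ≠ 0) (h8 : n % 8 ≠ 7) : Is3 n := by
  have : n % 4 = 2 ∨ n % 8 = 1 ∨ n % 8 = 3 ∨ n % 8 = 5 := by omega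
  rcases this with h | h | h | h
  · exact is3_two_mod_four n h
  · exact is3_odd_of_coeff n 3 ((3 * n - 1) / 2) (by omega) (by omega) (by omega)
  · exact is3_odd_of_coeff n 1 ((n - 1) / 2) (by omega) (by omega) (by omega)
  · exact is3_odd_of_coeff n 3 ((3 * n - 1) / 2) (by omega) (by omega) (by omega)

lemma Is3.four_mul {m : ℤ} (h : Is3 m) : Is3 (4 * m) := by
  obtain ⟨a, b, c, rfl⟩ := h
  exact ⟨2 * a, 2 * b, 2 * c, by ring⟩

lemma sq_mod_eight (a : ℤ) : a ^ 2 % 8 = 0 ∧ a % 2 = 0 ∨ a ^ 2 % 8 = 4 ∧ a % 2 = 0 ∨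
    a ^ 2 % 8 = 1 ∧ a % 2 = 1 := by
  have h : a % 8 = 0 ∨ a % 8 = 1 ∨ a % 8 = 2 ∨ a % 8 = 3 ∨ a % 8 = 4 ∨ a % 8 = 5 ∨ a % 8 = 6 ∨
    a % 8 = 7 := by omega
  rcases h with h | h | h | h | h | h | h | h <;>
    · have h2 : a ^ 2 % 8 = (a % 8) * (a % 8) % 8 := by rw [pow_two, Int.mul_emod]
      rw [h] at h2
      norm_num at h2
      omega

lemma Is3.of_four_mul {m : ℤ} (h : Is3 (4 * m)) : Is3 m := by
  obtain ⟨a, b, c, h⟩ := h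
  have ha := sq_mod_eight a
  have hb := sq_mod_eight b
  have hc := sq_mod_eight c
  obtain ⟨x, rfl⟩ : (2 : ℤ) ∣ a := by omega
  obtain ⟨y, rfl⟩ : (2 : ℤ) ∣ b := by omega
  obtain ⟨z, rfl⟩ : (2 : ℤ) ∣ c := by omega
  exact ⟨x, y, z, by linarith⟩

lemma is3_four_pow_mul (k : ℕ) (m : ℤ) : Is3 (4 ^ k * m) ↔ Is3 m := by
  induction k with
  | zero => simp
  | succ k ih => rw [pow_succ', mul_assoc, ← ih]; exact ⟨Is3.of_four_mul, Is3.four_mul⟩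

lemma not_is3_of_mod_eight {m : ℤ} (h : m % 8 = 7) : ¬ Is3 m := by
  rintro ⟨a, b, c, rfl⟩
  have ha := sq_mod_eight a
  have hb := sq_mod_eight b
  have hc := sq_mod_eight c
  omega

/-- Legendre's three-square theorem for `2 ^ g * u` with `u` odd. -/
lemma not_is3_iff (g u : ℕ) (hu : u % 2 = 1) :
    ¬ Is3 ((2 ^ g * u : ℕ) : ℤ) ↔ Even g ∧ u % 8 = 7 := by
  rcases Nat.even_or_odd' g with ⟨k, rfl | rfl⟩
  · push_cast
    rw [pow_mul, show (2 : ℤ) ^ 2 = 4 by norm_num, is3_four_pow_mul]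
    constructor
    · intro h
      refine ⟨by simp, ?_⟩
      by_contra h8
      exact h (is3_of_mod u (by omega) h8)
    · rintro ⟨-, h⟩
      exact not_is3_of_mod_eight (by omega)
  · have h : Is3 ((2 ^ (2 * k + 1) * u : ℕ) : ℤ) := by
      push_cast
      rw [pow_succ, pow_mul, show (2 : ℤ) ^ 2 = 4 by norm_num, mul_assoc, is3_four_pow_mul]
      exact_mod_cast is3_of_mod (2 * u) (by omega) (by omega)
    exact iff_of_false (not_not.2 h) (by simp)

/-! ### The odd part of the factorial modulo 8 -/

/-- The product of the odd numbers in `{1, …, n}`. -/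
def oddProd : ℕ → ℕ
  | 0 => 1
  | n + 1 => if n % 2 = 0 then (n + 1) * oddProd n else oddProd n

lemma factorial_eq (n : ℕ) : n.factorial = 2 ^ (n / 2) * (n / 2).factorial * oddProd n := by
  induction n with
  | zero => rfl
  | succ n ih =>
    rw [Nat.factorial_succ, ih, oddProd]
    split_ifs with h
    · rw [show (n + 1) / 2 = n / 2 by omega]; ring
    · obtain ⟨k, rfl⟩ : ∃ k, n = 2 * k + 1 := ⟨n / 2, by omega⟩
      rw [show (2 * k + 1) / 2 = k by omega, show (2 * k + 1 + 1) / 2 = k + 1 by omega,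
        Nat.factorial_succ]
      ring

/-- The products of the first few odd numbers modulo `8` are periodic, since
`1 * 3 * 5 * 7 ≡ 1`. -/
lemma oddProd_mod (n : ℕ) : oddProd n % 8 =
    3 ^ (if n % 8 = 3 ∨ n % 8 = 4 then 1 else 0) * 7 ^ (if n % 8 = 5 ∨ n % 8 = 6 then 1 else 0) := by
  induction n with
  | zero => rfl
  | succ n ih =>
    have h : n % 8 = 0 ∨ n % 8 = 1 ∨ n % 8 = 2 ∨ n % 8 = 3 ∨ n % 8 = 4 ∨ n % 8 = 5 ∨ n % 8 = 6 ∨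
      n % 8 = 7 := by omega
    rw [oddProd]
    rcases h with h | h | h | h | h | h | h | h <;>
    · rw [h] at ih
      norm_num at ih
      have h2 : (n + 1) % 8 = (n % 8 + 1) % 8 := by omega
      have h3 : (if n % 2 = 0 then (n + 1) * oddProd n else oddProd n) % 8 =
        (if n % 2 = 0 then ((n + 1) % 8) * (oddProd n % 8) else oddProd n % 8) % 8 := by
        split_ifs <;> simp [Nat.mul_mod]
      rw [h3, h2, ih, show n % 2 = n % 8 % 2 by omega, h]
      rfl

/-- The number of `k` for which `⌊n / 2 ^ k⌋ mod 8` lies in a given set avoiding `0`. -/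
noncomputable def count (s : Finset ℕ) (n : ℕ) : ℕ := Nat.card {k : ℕ | n / 2 ^ k % 8 ∈ s}

lemma count_eq (s : Finset ℕ) (hs : 0 ∉ s) (n N : ℕ) (h : n ≤ N) :
    count s n = ∑ k ∈ Finset.range N, if n / 2 ^ k % 8 ∈ s then 1 else 0 := by
  rw [← Finset.card_filter, count, Nat.card_coe_set_eq, ← Set.ncard_coe_finset]
  congr 1
  ext k
  simp only [Set.mem_ofPred_eq, Finset.coe_filter, Finset.mem_range, iff_and_self]
  intro hk
  by_contra! hN
  have : n < 2 ^ k := (h.trans hN).trans_lt Nat.lt_two_pow_self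
  rw [Nat.div_eq_of_lt this] at hk
  exact hs hk

/-- Position `0` looks at `n` itself, and position `k + 1` for `n` is position `k` for `n / 2`. -/
lemma count_half (s : Finset ℕ) (hs : 0 ∉ s) (n : ℕ) :
    count s n = count s (n / 2) + if n % 8 ∈ s then 1 else 0 := by
  rw [count_eq s hs n (n + 1) (by omega), count_eq s hs (n / 2) n (by omega),
    Finset.sum_range_succ']
  simp [pow_succ', Nat.div_div_eq_div_mul]

lemma bits_eq (n k : ℕ) : bit n k + 2 * bit n (k + 1) + 4 * bit n (k + 2) = n / 2 ^ k % 8 := by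
  simp only [bit, pow_add, ← Nat.div_div_eq_div_mul]
  omega

lemma alpha3_eq (n : ℕ) : alpha3 n = count {3, 4} n := by
  simp [alpha3, count, bits_eq]

lemma alpha5_eq (n : ℕ) : alpha5 n = count {5, 6} n := by
  simp [alpha5, count, bits_eq]

lemma factorial_decomp (n : ℕ) : ∃ g u : ℕ, n.factorial = 2 ^ g * u ∧
    u % 8 = 3 ^ alpha3 n * 7 ^ alpha5 n % 8 := by
  induction n using Nat.strong_induction_on with
  | _ n ih =>
  rcases Nat.eq_zero_or_pos n with rfl | hn
  · refine ⟨0, 1, rfl, ?_⟩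
    rw [alpha3_eq, alpha5_eq, count_eq _ (by decide) 0 0 le_rfl, count_eq _ (by decide) 0 0 le_rfl]
    rfl
  · obtain ⟨g, u, h1, h2⟩ := ih (n / 2) (by omega)
    refine ⟨n / 2 + g, u * oddProd n, ?_, ?_⟩
    · rw [factorial_eq, h1]; ring
    · rw [Nat.mul_mod, h2, oddProd_mod, alpha3_eq, alpha5_eq, alpha3_eq, alpha5_eq,
        count_half {3, 4} (by decide) n, count_half {5, 6} (by decide) n]
      simp only [Finset.mem_insert, Finset.mem_singleton]
      rw [Nat.mod_mul_mod, pow_add, pow_add]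
      congr 1
      ring

lemma pow_mod_eight (a b : ℕ) :
    3 ^ a * 7 ^ b % 8 % 2 = 1 ∧ (3 ^ a * 7 ^ b % 8 = 7 ↔ Even a ∧ Odd b) := by
  rcases Nat.even_or_odd' a with ⟨i, rfl | rfl⟩ <;> rcases Nat.even_or_odd' b with ⟨j, rfl | rfl⟩ <;>
  simp [pow_succ, pow_mul, Nat.mul_mod, Nat.pow_mod, parity_simps]

open Nat in
theorem stmt_4 (n : ℕ) (hn : 1 ≤ n) (γ : ℕ) (hγ : γ = padicValNat 2 (n !)) :
    (¬ ∃ a b c : ℤ, (n ! : ℤ) = a ^ 2 + b ^ 2 + c ^ 2) ↔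
      Even γ ∧ Even (alpha3 n) ∧ Odd (alpha5 n) := by
  obtain ⟨g, u, h1, h2⟩ := factorial_decomp n
  have h3 := pow_mod_eight (alpha3 n) (alpha5 n)
  rw [← h2] at h3
  have hg : γ = g := by
    rw [hγ, h1, padicValNat.mul (by positivity) (by omega), padicValNat.prime_pow,
      padicValNat.eq_zero_of_not_dvd (by omega), add_zero]
  rw [hg, ← h3.2, ← not_is3_iff g u (by omega), ← h1]
  rfl
end

section
/- Let k ≥ 5 and let n = 2^k + 2. Then Z(n) ≡ 3 (mod 8). -/
/-!
Write `(2N)! = 2^N * N! * (1 * 3 * ⋯ * (2N-1))`. When `4 ∣ N` the odd factors split into blocks of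
four consecutive odd numbers, each with product `≡ 1 * 3 * 5 * 7 ≡ 1 (mod 8)`. Doubling from
`4! = 2^3 * 3` therefore preserves the odd part mod 8, so `(2^k)! = 2^(2^k - 1) * m` with
`m ≡ 3 (mod 8)` for all `k ≥ 2`. The two further factors of `(2^k + 2)!` are `2^k + 1` and
`2 * (2^(k-1) + 1)`, which contribute one more factor `2` and an odd part `≡ 1 (mod 8)`.
The valuation of `(2^k + 2)!` is thus the even number `2^k`, and `Z` is exactly the odd part.
-/

open Nat in
/-- `Z n = n! / 4^⌊γ/2⌋` where `γ` is the 2-adic valuation of `n!`,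
so that `n! = 4^⌊γ/2⌋ * Z n`. -/
def Z (n : ℕ) : ℕ := n ! / 4 ^ (padicValNat 2 (n !) / 2)

lemma factorial_two_mul_eq (N : ℕ) :
    (2 * N).factorial = 2 ^ N * N.factorial * ∏ i ∈ Finset.range N, (2 * i + 1) := by
  induction N with
  | zero => simp
  | succ N ih =>
    rw [show 2 * (N + 1) = 2 * N + 1 + 1 by ring, Nat.factorial_succ, Nat.factorial_succ, ih,
      Finset.prod_range_succ, Nat.factorial_succ]
    ring

lemma prod_odd_mod_eight (q : ℕ) :
    (∏ i ∈ Finset.range (4 * q), (2 * i + 1)) % 8 = 1 := by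
  induction q with
  | zero => simp
  | succ q ih =>
    rw [show 4 * (q + 1) = 4 * q + 1 + 1 + 1 + 1 by ring]
    simp only [Finset.prod_range_succ]
    have h0 : (2 * (4 * q) + 1) % 8 = 1 := by omega
    have h1 : (2 * (4 * q + 1) + 1) % 8 = 3 := by omega
    have h2 : (2 * (4 * q + 1 + 1) + 1) % 8 = 5 := by omega
    have h3 : (2 * (4 * q + 1 + 1 + 1) + 1) % 8 = 7 := by omega
    simp [Nat.mul_mod, ih, h0, h1, h2, h3]

/-- The odd part of `(2 ^ k)!` is `3` mod `8` once `k ≥ 2`; the power of two is written on the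
left with an extra factor `2` to avoid the subtraction in `2 ^ k - 1`. -/
lemma two_mul_factorial_two_pow (k : ℕ) (hk : 2 ≤ k) :
    ∃ m, 2 * (2 ^ k).factorial = 2 ^ (2 ^ k) * m ∧ m % 8 = 3 := by
  induction k, hk using Nat.le_induction with
  | base => exact ⟨3, by decide, rfl⟩
  | succ k hk ih =>
    obtain ⟨m, hm, hm8⟩ := ih
    obtain ⟨q, hq⟩ : 4 ∣ 2 ^ k := pow_dvd_pow 2 hk
    refine ⟨m * ∏ i ∈ Finset.range (2 ^ k), (2 * i + 1), ?_, ?_⟩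
    · rw [pow_succ' 2 k, factorial_two_mul_eq, two_mul (2 ^ k), pow_add]
      linear_combination (2 ^ (2 ^ k) * ∏ i ∈ Finset.range (2 ^ k), (2 * i + 1)) * hm
    · rw [hq, Nat.mul_mod, hm8, prod_odd_mod_eight]

theorem stmt_7 (k : ℕ) (hk : 5 ≤ k) (n : ℕ) (hn : n = 2 ^ k + 2) :
    Z n % 8 = 3 := by
  subst hn
  obtain ⟨m, hm, hm8⟩ := two_mul_factorial_two_pow k (by omega)
  obtain ⟨r, hr⟩ : 2 ^ 4 ∣ 2 ^ k := pow_dvd_pow 2 (by omega)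
  have hfac : (2 ^ k + 2).factorial = 2 ^ (2 ^ k) * (m * (2 ^ k + 1) * (8 * r + 1)) := by
    rw [Nat.factorial_succ, Nat.factorial_succ]
    have h2 : 2 ^ k + 1 + 1 = 2 * (8 * r + 1) := by omega
    rw [h2]
    linear_combination ((8 * r + 1) * (2 ^ k + 1)) * hm
  have hodd : (m * (2 ^ k + 1) * (8 * r + 1)) % 8 = 3 := by
    have h1 : (2 ^ k + 1) % 8 = 1 := by omega
    have h2 : (8 * r + 1) % 8 = 1 := by omega
    simp [Nat.mul_mod, hm8, h1, h2]
  generalize m * (2 ^ k + 1) * (8 * r + 1) = t at hfac hodd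
  have hval : padicValNat 2 (2 ^ k + 2).factorial = 2 ^ k := by
    rw [hfac, padicValNat.mul (by positivity) (by omega), padicValNat.prime_pow,
      padicValNat.eq_zero_of_not_dvd (by omega), add_zero]
  have hpow : 4 ^ (2 ^ k / 2) = 2 ^ (2 ^ k) := by
    rw [show 4 = 2 ^ 2 by rfl, ← pow_mul, show 2 * (2 ^ k / 2) = 2 ^ k by omega]
  rw [Z, hval, hpow, hfac, Nat.mul_div_cancel_left _ (by positivity), hodd]
end
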